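/- (Theorem 10, monotonicity.) For every integer n ≥ 0 and every η ∈ [0,1], C_{Poly-n}(η) ≥ C_{Poly-(n+1)}(η). -/

import Mathlib

/-!
On `[0, 1/2]`, integration by parts gives `F_n(η) = ∫₀^{1/2} min(s, η) (s(1-s))ⁿ ds`, so the claim
`F_n(η) / F_n(1/2) ≥ F_{n+1}(η) / F_{n+1}(1/2)` is Chebyshev's correlation inequality for the weight
`s (s(1-s))ⁿ`, the decreasing function `min(s, η) / s` and the increasing function `s(1-s)`
(`chebyshev_min`). The range `[1/2, 1]` follows from the symmetry `F_n(1-η) = F_n(η)`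
(`Fpoly_symm`), a consequence of `F_n'` being odd about `1/2`.
-/

open Set MeasureTheory

/-- `Q_n(η) = −∫₀^η (t(1−t))ⁿ dt`. -/
noncomputable def Qpoly (n : ℕ) (η : ℝ) : ℝ := -∫ t in (0:ℝ)..η, (t * (1 - t))^n

/-- `K1_n = −Q_n(1/2)`. -/
noncomputable def K1poly (n : ℕ) : ℝ := -Qpoly n (1/2)

/-- `F_n(η) = ∫₀^η Q_n(s) ds + K1_n·η`. -/
noncomputable def Fpoly (n : ℕ) (η : ℝ) : ℝ := (∫ s in (0:ℝ)..η, Qpoly n s) + K1poly n * η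

/-- `K2_n = (1/2)/F_n(1/2)`. -/
noncomputable def K2poly (n : ℕ) : ℝ := (1/2) / Fpoly n (1/2)

/-- The polynomial minimum conditional risk function `C_{Poly-n}(η) = K2_n·F_n(η)`. -/
noncomputable def CPoly (n : ℕ) (η : ℝ) : ℝ := K2poly n * Fpoly n η

lemma K1poly_add_Qpoly (n : ℕ) (s : ℝ) :
    K1poly n + Qpoly n s = ∫ t in s..(1/2 : ℝ), (t * (1 - t)) ^ n := by
  have hc : Continuous fun t : ℝ => (t * (1 - t)) ^ n := by fun_prop
  have := intervalIntegral.integral_add_adjacent_intervals (hc.intervalIntegrable (μ := volume) 0 s)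
    (hc.intervalIntegrable s (1/2))
  unfold K1poly Qpoly
  linarith

lemma hasDerivAt_Qpoly (n : ℕ) (s : ℝ) : HasDerivAt (Qpoly n) (-(s * (1 - s)) ^ n) s := by
  have hc : Continuous fun t : ℝ => (t * (1 - t)) ^ n := by fun_prop
  exact (hc.integral_hasStrictDerivAt 0 s).hasDerivAt.neg

lemma continuous_Qpoly (n : ℕ) : Continuous (Qpoly n) :=
  continuous_iff_continuousAt.2 fun s => (hasDerivAt_Qpoly n s).continuousAt

lemma Fpoly_eq_integral (n : ℕ) (η : ℝ) :
    Fpoly n η = ∫ s in (0 : ℝ)..η, (K1poly n + Qpoly n s) := by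
  rw [intervalIntegral.integral_add (by simp) ((continuous_Qpoly n).intervalIntegrable _ _)]
  simp only [Fpoly, intervalIntegral.integral_const, smul_eq_mul]
  ring

lemma Fpoly_symm (n : ℕ) (η : ℝ) : Fpoly n (1 - η) = Fpoly n η := by
  have hodd : ∀ s, K1poly n + Qpoly n (1 - s) = -(K1poly n + Qpoly n s) := by
    intro s
    rw [K1poly_add_Qpoly, K1poly_add_Qpoly, ← intervalIntegral.integral_symm]
    have := intervalIntegral.integral_comp_sub_left (a := (1/2 : ℝ)) (b := s)
      (fun t : ℝ => (t * (1 - t)) ^ n) 1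
    norm_num at this ⊢
    rw [← this]
    congr 1
    ext t
    ring
  have hc : Continuous fun s => K1poly n + Qpoly n s := continuous_const.add (continuous_Qpoly n)
  have key : ∀ x, Fpoly n (1 - x) = Fpoly n x - Fpoly n 1 := by
    intro x
    have h1 := intervalIntegral.integral_comp_sub_left (a := x) (b := 1)
      (fun s => K1poly n + Qpoly n s) 1
    simp only [hodd, sub_self, intervalIntegral.integral_neg] at h1
    have h2 := intervalIntegral.integral_add_adjacent_intervals
      (hc.intervalIntegrable (μ := volume) 0 x) (hc.intervalIntegrable x 1)
    simp only [Fpoly_eq_integral]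
    linarith
  have h0 := key 0
  have hF0 : Fpoly n 0 = 0 := by simp [Fpoly]
  rw [sub_zero, hF0] at h0
  rw [key η]
  linarith

/-- `F_n` is the Green's function integral of the weight `(s(1-s))ⁿ` on `[0, 1/2]`. -/
lemma Fpoly_eq_min (n : ℕ) {η : ℝ} (h0 : 0 ≤ η) (h1 : η ≤ 1/2) :
    Fpoly n η = ∫ s in (0 : ℝ)..(1/2), min s η * (s * (1 - s)) ^ n := by
  have hc : Continuous fun s : ℝ => s * (s * (1 - s)) ^ n := by fun_prop
  have hm : Continuous fun s : ℝ => min s η * (s * (1 - s)) ^ n := by fun_prop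
  have hd : ∀ x : ℝ, HasDerivAt
      (fun x => x * (K1poly n + Qpoly n x) + ∫ s in (0 : ℝ)..x, s * (s * (1 - s)) ^ n)
      (K1poly n + Qpoly n x) x := by
    intro x
    have := ((hasDerivAt_id x).mul ((hasDerivAt_Qpoly n x).const_add (K1poly n))).add
      (hc.integral_hasStrictDerivAt 0 x).hasDerivAt
    exact this.congr_deriv (by simp only [id]; ring)
  rw [Fpoly_eq_integral, intervalIntegral.integral_eq_sub_of_hasDerivAt (fun x _ => hd x)
    ((continuous_const.add (continuous_Qpoly n)).intervalIntegrable _ _),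
    ← intervalIntegral.integral_add_adjacent_intervals (hm.intervalIntegrable 0 η)
      (hm.intervalIntegrable η (1/2))]
  have e1 : ∫ s in (0 : ℝ)..η, min s η * (s * (1 - s)) ^ n
      = ∫ s in (0 : ℝ)..η, s * (s * (1 - s)) ^ n := by
    apply intervalIntegral.integral_congr
    intro s hs
    rw [uIcc_of_le h0] at hs
    simp only [min_eq_left hs.2]
  have e2 : ∫ s in η..(1/2 : ℝ), min s η * (s * (1 - s)) ^ n
      = η * (K1poly n + Qpoly n η) := by
    rw [K1poly_add_Qpoly, ← intervalIntegral.integral_const_mul]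
    apply intervalIntegral.integral_congr
    intro s hs
    rw [uIcc_of_le h1] at hs
    simp only [min_eq_right hs.1]
  rw [e1, e2]
  simp only [intervalIntegral.integral_same]
  ring

lemma Fpoly_half (n : ℕ) :
    Fpoly n (1/2) = ∫ s in (0 : ℝ)..(1/2), s * (s * (1 - s)) ^ n := by
  rw [Fpoly_eq_min n (by norm_num) le_rfl]
  apply intervalIntegral.integral_congr
  intro s hs
  rw [uIcc_of_le (by norm_num)] at hs
  simp only [min_eq_left hs.2]

lemma Fpoly_half_pos (n : ℕ) : 0 < Fpoly n (1/2) := by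
  rw [Fpoly_half]
  apply intervalIntegral.intervalIntegral_pos_of_pos_on
  · exact Continuous.intervalIntegrable (by fun_prop) _ _
  · intro s hs
    have h1 : 0 < s := hs.1
    have h2 : 0 < 1 - s := by linarith [hs.2]
    positivity
  · norm_num

lemma Fpoly_half_succ_le (n : ℕ) : Fpoly (n + 1) (1/2) ≤ 1/4 * Fpoly n (1/2) := by
  rw [Fpoly_half, Fpoly_half, ← intervalIntegral.integral_const_mul]
  apply intervalIntegral.integral_mono_on (by norm_num)
    (Continuous.intervalIntegrable (by fun_prop) _ _)
    (Continuous.intervalIntegrable (by fun_prop) _ _)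
  intro s hs
  have h1 : 0 ≤ s := hs.1
  have h2 : 0 ≤ 1 - s := by linarith [hs.2]
  have h3 : 0 ≤ s * (s * (1 - s)) ^ n := by positivity
  rw [pow_succ]
  nlinarith [mul_nonneg h3 (sq_nonneg (s - 1/2))]

/-- `min(s, η) / s` is decreasing in `s` and `s(1-s)` is increasing on `[0, 1/2]`, so their
deviations from their values at `r` have opposite signs. -/
lemma min_mul_sub_nonneg {η r s : ℝ} (hη : 0 ≤ η) (hr : 0 < r) (hr' : r ≤ 1/2) (hs : 0 ≤ s)
    (hs' : s ≤ 1/2) : 0 ≤ (min s η - min r η / r * s) * (r * (1 - r) - s * (1 - s)) := by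
  have e : (min s η - min r η / r * s) * (r * (1 - r) - s * (1 - s))
      = ((min s η * r - min r η * s) * (r - s)) * (1 - r - s) / r := by
    field_simp
    ring
  rw [e]
  refine div_nonneg (mul_nonneg ?_ (by linarith)) hr.le
  rcases le_total s r with h | h
  · refine mul_nonneg ?_ (by linarith)
    rcases min_cases s η with ⟨h1, h2⟩ | ⟨h1, h2⟩ <;>
      rcases min_cases r η with ⟨h3, h4⟩ | ⟨h3, h4⟩ <;> rw [h1, h3] <;> nlinarith
  · refine mul_nonneg_of_nonpos_of_nonpos ?_ (by linarith)
    rcases min_cases s η with ⟨h1, h2⟩ | ⟨h1, h2⟩ <;>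
      rcases min_cases r η with ⟨h3, h4⟩ | ⟨h3, h4⟩ <;> rw [h1, h3] <;> nlinarith

lemma chebyshev_min (n : ℕ) {η : ℝ} (h0 : 0 ≤ η) (h1 : η ≤ 1/2) :
    Fpoly (n + 1) η ≤ Fpoly (n + 1) (1/2) / Fpoly n (1/2) * Fpoly n η := by
  have hb := Fpoly_half_pos n
  have ha := Fpoly_half_pos (n + 1)
  set l := Fpoly (n + 1) (1/2) / Fpoly n (1/2) with hl
  have hl0 : 0 < l := div_pos ha hb
  have hl1 : l ≤ 1/4 := by
    rw [hl, div_le_iff₀ hb]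
    exact Fpoly_half_succ_le n
  have hlb : l * Fpoly n (1/2) = Fpoly (n + 1) (1/2) := div_mul_cancel₀ _ hb.ne'
  -- `l` is the weighted mean of `s(1-s)`; `r` is the point of `[0, 1/2]` where it is attained.
  obtain ⟨r, ⟨hr0, hr1⟩, hr⟩ : l ∈ (fun s : ℝ => s * (1 - s)) '' Icc 0 (1/2) := by
    apply intermediate_value_Icc (by norm_num) (by fun_prop)
    constructor <;> norm_num <;> linarith
  simp only at hr
  have hr0' : 0 < r := hr0.lt_of_ne (by rintro rfl; simp at hr; linarith)
  set c := min r η / r with hcdef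
  have hint : 0 ≤ ∫ s in (0 : ℝ)..(1/2),
      (min s η - c * s) * (l - s * (1 - s)) * (s * (1 - s)) ^ n := by
    apply intervalIntegral.integral_nonneg (by norm_num)
    intro s hs
    have h2 : 0 ≤ s := hs.1
    have h3 : 0 ≤ 1 - s := by linarith [hs.2]
    have h4 := min_mul_sub_nonneg h0 hr0' hr1 hs.1 hs.2
    rw [hr] at h4
    exact mul_nonneg h4 (by positivity)
  have hexp : ∫ s in (0 : ℝ)..(1/2), (min s η - c * s) * (l - s * (1 - s)) * (s * (1 - s)) ^ n
      = (l * Fpoly n η - Fpoly (n + 1) η)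
        - c * (l * Fpoly n (1/2) - Fpoly (n + 1) (1/2)) := by
    rw [Fpoly_half, Fpoly_half, Fpoly_eq_min n h0 h1, Fpoly_eq_min (n + 1) h0 h1]
    simp only [← intervalIntegral.integral_const_mul]
    rw [← intervalIntegral.integral_sub, ← intervalIntegral.integral_sub,
      ← intervalIntegral.integral_const_mul, ← intervalIntegral.integral_sub]
    · congr 1
      ext s
      ring
    all_goals exact Continuous.intervalIntegrable (by fun_prop) _ _
  rw [hexp, hlb] at hint
  linarith

lemma CPoly_succ_le (n : ℕ) {η : ℝ} (h0 : 0 ≤ η) (h1 : η ≤ 1/2) :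
    CPoly (n + 1) η ≤ CPoly n η := by
  have hb := Fpoly_half_pos n
  have ha := Fpoly_half_pos (n + 1)
  have h := chebyshev_min n h0 h1
  unfold CPoly K2poly
  calc (1/2) / Fpoly (n + 1) (1/2) * Fpoly (n + 1) η
      ≤ (1/2) / Fpoly (n + 1) (1/2) * (Fpoly (n + 1) (1/2) / Fpoly n (1/2) * Fpoly n η) := by
        gcongr
    _ = (1/2) / Fpoly n (1/2) * Fpoly n η := by
        field_simp

/-- (Theorem 10, monotonicity.) `C_{Poly-n}(η) ≥ C_{Poly-(n+1)}(η)` for all `η ∈ [0,1]`. -/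
theorem cpoly_antitone (n : ℕ) : ∀ η ∈ Icc (0:ℝ) 1, CPoly n η ≥ CPoly (n + 1) η := by
  intro η hη
  rcases le_total η (1/2) with h | h
  · exact CPoly_succ_le n hη.1 h
  · have := CPoly_succ_le n (η := 1 - η) (by linarith [hη.2]) (by linarith)
    simpa only [CPoly, Fpoly_symm] using this
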